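/- Let Y be a closed subspace of C[0,1] that is isomorphic (linearly homeomorphic) to c₀. Then for every x*, e* in the unit sphere of C[0,1]* = M[0,1] such that e* has no atoms (i.e., e*({t}) = 0 for every t ∈ [0,1]), every ε > 0, and every f in the unit sphere of C[0,1] satisfying e*(f) > 1 − ε, there exists v* in the closed unit ball of M[0,1] such that v*(f) > 1 − ε, ‖x* + v*‖ > 2 − ε, and ‖(e* − v*)|_Y‖ < ε. -/

import Mathlib

open MeasureTheory

/-- The unit interval `[0,1]` as a subtype of `ℝ`. -/
abbrev I01 : Type := Set.Icc (0 : ℝ) 1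

/-- The Banach space `C[0,1]` of continuous real functions on `[0,1]` with the sup norm. -/
abbrev C01 : Type := C(I01, ℝ)

/-- The Banach space `c₀` of real sequences converging to `0`, with the sup norm. -/
abbrev c0 : Type := ZeroAtInftyContinuousMap ℕ ℝ

/-- The total variation norm of a signed Radon measure on `[0,1]`; this is the norm of
`M[0,1] = C[0,1]*`. -/
noncomputable def smNorm (μ : SignedMeasure I01) : ℝ :=
  (μ.totalVariation Set.univ).toReal

/-- The action of a signed measure `μ ∈ M[0,1]` on `f ∈ C[0,1]` by integration. -/
noncomputable def smInt (μ : SignedMeasure I01) (f : C01) : ℝ :=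
  ∫ x, f x ∂μ.toJordanDecomposition.posPart - ∫ x, f x ∂μ.toJordanDecomposition.negPart

/-- The norm of the restriction of (the functional induced by) a signed measure `μ` to
a subspace `Y ⊆ C[0,1]`, i.e. `sup {|μ(y)| : y ∈ Y, ‖y‖ ≤ 1}`. -/
noncomputable def smRestNorm (μ : SignedMeasure I01) (Y : Submodule ℝ C01) : ℝ :=
  sSup {r : ℝ | ∃ y ∈ Y, ‖y‖ ≤ 1 ∧ r = |smInt μ y|}

open Filter Topology

lemma c0_norm_le (x : c0) (C : ℝ) (hC : 0 ≤ C) (h : ∀ n, |x n| ≤ C) : ‖x‖ ≤ C := by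
  rw [← ZeroAtInftyContinuousMap.norm_toBCF_eq_norm]
  exact (BoundedContinuousFunction.norm_le hC).2 h

lemma c0_abs_le (x : c0) (n : ℕ) : |x n| ≤ ‖x‖ := by
  rw [← ZeroAtInftyContinuousMap.norm_toBCF_eq_norm]
  exact x.toBCF.norm_coe_le_norm n

noncomputable def c0Bump (n : ℕ) : c0 where
  toFun := fun m => if m = n then 1 else 0
  continuous_toFun := continuous_of_discreteTopology
  zero_at_infty' := by
    rw [Filter.cocompact_eq_cofinite]
    apply tendsto_const_nhds.congr'
    have : ({n}ᶜ : Set ℕ) ∈ cofinite := (Set.finite_singleton n).compl_mem_cofinite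
    filter_upwards [this] with m hm
    simp at hm
    simp [hm]

lemma c0Bump_apply (n m : ℕ) : c0Bump n m = if m = n then 1 else 0 := rfl

lemma c0_sum_apply (F : Finset ℕ) (a : ℕ → ℝ) (m : ℕ) :
    (∑ n ∈ F, a n • c0Bump n) m = if m ∈ F then a m else 0 := by
  let A : c0 →+ ℝ := { toFun := fun x => x m, map_zero' := rfl, map_add' := fun _ _ => rfl }
  change A (∑ n ∈ F, a n • c0Bump n) = _
  rw [map_sum]
  have : ∀ n, A (a n • c0Bump n) = if m = n then a n else 0 := by
    intro n
    change a n * c0Bump n m = _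
    rw [c0Bump_apply]; simp
  simp [this]

lemma c0_tendsto (x : c0) :
    Tendsto (fun N => ∑ n ∈ Finset.range N, x n • c0Bump n) atTop (𝓝 x) := by
  rw [Metric.tendsto_atTop]
  intro e he
  have h0 : Tendsto x atTop (𝓝 0) := by
    have := x.zero_at_infty'
    rwa [Filter.cocompact_eq_cofinite, Nat.cofinite_eq_atTop] at this
  obtain ⟨N, hN⟩ := Metric.tendsto_atTop.1 h0 (e / 2) (by positivity)
  refine ⟨N, fun M hM => ?_⟩
  rw [dist_eq_norm]
  refine lt_of_le_of_lt (c0_norm_le _ (e / 2) (by positivity) fun n => ?_) (by linarith)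
  rw [ZeroAtInftyContinuousMap.sub_apply, c0_sum_apply]
  split_ifs with h
  · simp; positivity
  · have := hN n (by simp at h; omega)
    rw [Real.dist_eq] at this
    simp at this ⊢
    exact this.le


lemma equiv_bounds {E F : Type*} [NormedAddCommGroup E] [NormedSpace ℝ E] [NormedAddCommGroup F]
    [NormedSpace ℝ F] (T : E ≃L[ℝ] F) :
    ∃ K : ℝ, 0 ≤ K ∧ (∀ x, ‖T x‖ ≤ K * ‖x‖) ∧ ∀ y, ‖T.symm y‖ ≤ K * ‖y‖ := by
  refine ⟨max ‖(T : E →L[ℝ] F)‖ ‖(T.symm : F →L[ℝ] E)‖, le_max_of_le_left (norm_nonneg _),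
    fun x => ?_, fun y => ?_⟩
  · refine ((T : E →L[ℝ] F).le_opNorm x).trans ?_
    gcongr
    exact le_max_left _ _
  · refine ((T.symm : F →L[ℝ] E).le_opNorm y).trans ?_
    gcongr
    exact le_max_right _ _

lemma Y_data (Y : Submodule ℝ C01) (T : Y ≃L[ℝ] c0) :
    ∃ (K : ℝ) (e : ℕ → C01), 0 ≤ K ∧ (∀ t (F : Finset ℕ), ∑ n ∈ F, |e n t| ≤ K) ∧
      ∀ y ∈ Y, ‖y‖ ≤ 1 → ∃ a : ℕ → ℝ, (∀ n, |a n| ≤ K) ∧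
        ∀ t, Tendsto (fun N => ∑ n ∈ Finset.range N, a n * e n t) atTop (𝓝 (y t)) := by
  obtain ⟨K, hK, h1, h2⟩ := equiv_bounds (E := Y) (F := c0) T
  have happ : ∀ (F : Finset ℕ) (a : ℕ → ℝ) (t : I01),
      ((T.symm (∑ n ∈ F, a n • c0Bump n) : Y) : C01) t
        = ∑ n ∈ F, a n * ((T.symm (c0Bump n) : Y) : C01) t := by
    intro F a t
    rw [map_sum, Submodule.coe_sum, ContinuousMap.sum_apply]
    refine Finset.sum_congr rfl fun n _ => ?_
    rw [map_smul]
    rfl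
  refine ⟨K, fun n => ((T.symm (c0Bump n) : Y) : C01), hK, fun t F => ?_, fun y hy hy1 => ?_⟩
  · set s : ℕ → ℝ := fun n => (SignType.sign (((T.symm (c0Bump n) : Y) : C01) t) : ℝ)
    have e1 : ∑ n ∈ F, |((T.symm (c0Bump n) : Y) : C01) t|
        = ((T.symm (∑ n ∈ F, s n • c0Bump n) : Y) : C01) t := by
      rw [happ]
      refine Finset.sum_congr rfl fun n _ => ?_
      rw [sign_mul_self]
    rw [e1]
    refine (le_abs_self _).trans ((ContinuousMap.norm_coe_le_norm _ t).trans ((h2 _).trans ?_))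
    refine mul_le_of_le_one_right hK (c0_norm_le _ 1 zero_le_one fun n => ?_)
    rw [c0_sum_apply]
    split_ifs
    · simp only [s]
      rcases SignType.sign (((T.symm (c0Bump n) : Y) : C01) t) with _ | _ | _ <;> simp
    · simp
  · refine ⟨fun n => T ⟨y, hy⟩ n, fun n => ?_, fun t => ?_⟩
    · refine (c0_abs_le _ n).trans ((h1 _).trans (mul_le_of_le_one_right hK hy1))
    · have c1 : Continuous fun x : c0 => ((T.symm x : Y) : C01) t :=
        (continuous_eval_const t).comp
          (continuous_subtype_val.comp T.symm.continuous)
      have := (c1.tendsto _).comp (c0_tendsto (T ⟨y, hy⟩))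
      simp only [ContinuousLinearEquiv.symm_apply_apply] at this
      refine this.congr fun N => ?_
      exact happ _ _ _

lemma sampling {α E : Type*} [MeasurableSpace α] [NormedAddCommGroup E] [NormedSpace ℝ E]
    [CompleteSpace E] (P : Measure α) [IsProbabilityMeasure P] (G : α → E)
    (hG : StronglyMeasurable G) (K : ℝ) (hK : ∀ t, ‖G t‖ ≤ K) (S : Set α) (hS : ∀ᵐ t ∂P, t ∈ S)
    (δ : ℝ) (hδ : 0 < δ) :
    ∃ (n : ℕ) (w : Fin n → ℝ) (p : Fin n → α), (∀ i, 0 ≤ w i) ∧ ∑ i, w i = 1 ∧ (∀ i, p i ∈ S) ∧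
      ‖∫ t, G t ∂P - ∑ i, w i • G (p i)‖ < δ := by
  have hi : Integrable G P :=
    (integrable_const K).mono' hG.aestronglyMeasurable (Eventually.of_forall hK)
  have hmem : ∫ t, G t ∂P ∈ closure (convexHull ℝ (G '' S)) := by
    refine Convex.integral_mem (convex_convexHull ℝ _).closure isClosed_closure ?_ hi
    filter_upwards [hS] with t ht
    exact subset_closure (subset_convexHull ℝ _ ⟨t, ht, rfl⟩)
  obtain ⟨z, hz, hd⟩ := Metric.mem_closure_iff.1 hmem δ hδ
  obtain ⟨ι, _, w, a, hw0, hw1, ha, rfl⟩ := mem_convexHull_iff_exists_fintype.1 hz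
  choose p hpS hp using ha
  let q := Fintype.equivFin ι
  refine ⟨Fintype.card ι, w ∘ q.symm, p ∘ q.symm, fun i => hw0 _, ?_, fun i => hpS _, ?_⟩
  · rw [← hw1]; exact q.symm.sum_comp w
  · rw [dist_eq_norm] at hd
    have : ∑ i, (w ∘ q.symm) i • G ((p ∘ q.symm) i) = ∑ i, w i • a i := by
      rw [← q.symm.sum_comp]
      simp [hp]
    rwa [this]

/-! ### signed measures -/

lemma smInt_eq (μ : SignedMeasure I01) (P N : Measure I01) [IsFiniteMeasure P] [IsFiniteMeasure N]
    (h : μ = P.toSignedMeasure - N.toSignedMeasure) (g : C01) :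
    smInt μ g = ∫ x, g x ∂P - ∫ x, g x ∂N := by
  have h1 : μ.toJordanDecomposition.posPart.toSignedMeasure
      - μ.toJordanDecomposition.negPart.toSignedMeasure = P.toSignedMeasure - N.toSignedMeasure := by
    rw [← h]
    exact μ.toSignedMeasure_toJordanDecomposition
  have h2 : μ.toJordanDecomposition.posPart + N = P + μ.toJordanDecomposition.negPart := by
    rw [← Measure.toSignedMeasure_eq_toSignedMeasure_iff, Measure.toSignedMeasure_add,
      Measure.toSignedMeasure_add]
    exact sub_eq_sub_iff_add_eq_add.1 h1
  have hi : ∀ (R : Measure I01) [IsFiniteMeasure R], Integrable g R := fun R _ =>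
    g.continuous.integrable_of_hasCompactSupport (HasCompactSupport.of_compactSpace _)
  have h3 := congrArg (fun ρ : Measure I01 => ∫ x, g x ∂ρ) h2
  rw [integral_add_measure (hi _) (hi _), integral_add_measure (hi _) (hi _)] at h3
  unfold smInt
  linarith

open Classical in
/-- the sign function which is `-1` on `A` and `1` off `A` -/
noncomputable def sgn (A : Set I01) (t : I01) : ℝ := if t ∈ A then -1 else 1

lemma sgn_abs (A : Set I01) (t : I01) : |sgn A t| = 1 := by
  unfold sgn; split_ifs <;> simp

lemma sgn_meas (A : Set I01) (hA : MeasurableSet A) : Measurable (sgn A) :=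
  Measurable.ite hA measurable_const measurable_const

lemma sgn_integral (A : Set I01) (hA : MeasurableSet A) (Q : Measure I01) [IsFiniteMeasure Q]
    (g : C01) : ∫ x, sgn A x * g x ∂Q = ∫ x, g x ∂(Q.restrict Aᶜ) - ∫ x, g x ∂(Q.restrict A) := by
  have hi : Integrable (fun x => sgn A x * g x) Q := by
    refine (integrable_const ‖g‖).mono'
      ((sgn_meas A hA).mul g.continuous.measurable).aestronglyMeasurable
      (Eventually.of_forall fun x => ?_)
    rw [norm_mul, Real.norm_eq_abs, sgn_abs, one_mul]
    exact g.norm_coe_le_norm x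
  rw [← integral_add_compl hA hi]
  have e1 : ∫ x in A, sgn A x * g x ∂Q = ∫ x in A, - g x ∂Q :=
    setIntegral_congr_fun hA fun x hx => by simp [sgn, hx]
  have e2 : ∫ x in Aᶜ, sgn A x * g x ∂Q = ∫ x in Aᶜ, g x ∂Q :=
    setIntegral_congr_fun hA.compl fun x hx => by
      have : x ∉ A := hx
      simp [sgn, this]
  rw [e1, e2, integral_neg]
  ring

lemma es_data (es : SignedMeasure I01) (hat : ∀ t : I01, es {t} = 0) :
    ∃ A : Set I01, MeasurableSet A ∧
      (∀ g, smInt es g = ∫ x, sgn A x * g x ∂es.totalVariation) ∧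
      (∀ t, es.totalVariation {t} = 0) := by
  obtain ⟨A, hA, hpos, hneg⟩ := es.toJordanDecomposition.mutuallySingular
  have e : es.totalVariation = es.toJordanDecomposition.posPart
    + es.toJordanDecomposition.negPart := rfl
  have r1 : es.totalVariation.restrict Aᶜ = es.toJordanDecomposition.posPart := by
    rw [e, Measure.restrict_add, Measure.restrict_eq_zero.2 hneg, add_zero]
    apply Measure.restrict_eq_self_of_ae_mem
    rw [ae_iff]; simpa using hpos
  have r2 : es.totalVariation.restrict A = es.toJordanDecomposition.negPart := by
    rw [e, Measure.restrict_add, Measure.restrict_eq_zero.2 hpos, zero_add]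
    apply Measure.restrict_eq_self_of_ae_mem
    rw [ae_iff]; exact hneg
  have : IsFiniteMeasure es.totalVariation := by rw [e]; infer_instance
  refine ⟨A, hA, fun g => ?_, fun t => ?_⟩
  · rw [sgn_integral A hA, r1, r2]; rfl
  · have h1 := hat t
    rw [← es.toSignedMeasure_toJordanDecomposition, JordanDecomposition.toSignedMeasure,
      Measure.toSignedMeasure_sub_apply (measurableSet_singleton t)] at h1
    rw [e, Measure.add_apply]
    by_cases ht : t ∈ A
    · have p0 : es.toJordanDecomposition.posPart {t} = 0 :=
        measure_mono_null (Set.singleton_subset_iff.2 ht) hpos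
      rw [measureReal_def, p0] at h1
      have : es.toJordanDecomposition.negPart {t} = 0 := by
        rw [← measureReal_eq_zero_iff]; simpa using h1
      rw [p0, this, add_zero]
    · have p0 : es.toJordanDecomposition.negPart {t} = 0 :=
        measure_mono_null (Set.singleton_subset_iff.2 ht) hneg
      rw [measureReal_def (μ := es.toJordanDecomposition.negPart), p0] at h1
      have : es.toJordanDecomposition.posPart {t} = 0 := by
        rw [← measureReal_eq_zero_iff]; simpa using h1
      rw [p0, this, add_zero]

lemma countable_atoms (μ : Measure I01) [IsFiniteMeasure μ] : {t | μ {t} ≠ 0}.Countable := by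
  have := Measure.countable_meas_pos_of_disjoint_iUnion (μ := μ) (As := fun t : I01 => {t})
    (fun t => measurableSet_singleton t) (fun a b h => by simpa using h)
  simpa [pos_iff_ne_zero] using this

lemma v_data (xs : SignedMeasure I01) (hxs : smNorm xs = 1) (A : Set I01) (hA : MeasurableSet A)
    (n : ℕ) (w : Fin n → ℝ) (p : Fin n → I01) (hw : ∀ i, 0 ≤ w i) (hw1 : ∑ i, w i = 1)
    (hp : ∀ i, xs.totalVariation {p i} = 0) :
    ∃ v : SignedMeasure I01, smNorm v = 1 ∧ smNorm (xs + v) = 2 ∧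
      (∀ g, smInt v g = ∑ i, w i * (sgn A (p i) * g (p i))) ∧
      ∀ es g, smInt (es - v) g = smInt es g - smInt v g := by
  let Q : Measure I01 := ∑ i, ENNReal.ofReal (w i) • Measure.dirac (p i)
  have hQu : Q Set.univ = 1 := by
    simp only [Q, Measure.finsetSum_apply, Measure.smul_apply, smul_eq_mul, measure_univ, mul_one]
    rw [← ENNReal.ofReal_sum_of_nonneg (fun i _ => hw i), hw1, ENNReal.ofReal_one]
  have : IsProbabilityMeasure Q := ⟨hQu⟩
  have hQi : ∀ g : I01 → ℝ, ∫ x, g x ∂Q = ∑ i, w i * g (p i) := by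
    intro g
    simp only [Q]
    rw [integral_finsetSum_measure]
    · refine Finset.sum_congr rfl fun i _ => ?_
      rw [integral_smul_measure, integral_dirac, ENNReal.toReal_ofReal (hw i), smul_eq_mul]
    · intro i _
      exact (integrable_dirac (by simp)).smul_measure ENNReal.ofReal_ne_top
  have hXQ : xs.totalVariation ⟂ₘ Q := by
    have hF : (Set.range p).Finite := Set.finite_range p
    refine ⟨Set.range p, hF.measurableSet, ?_, ?_⟩
    · rw [measure_null_iff_singleton hF.countable]
      rintro _ ⟨i, rfl⟩
      exact hp i
    · simp only [Q, Measure.finsetSum_apply, Measure.smul_apply, smul_eq_mul]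
      refine Finset.sum_eq_zero fun i _ => ?_
      rw [Measure.dirac_apply' _ hF.measurableSet.compl]
      simp
  have eX : xs.totalVariation = xs.toJordanDecomposition.posPart
    + xs.toJordanDecomposition.negPart := rfl
  rw [eX, Measure.MutuallySingular.add_left_iff] at hXQ
  obtain ⟨hX1, hX2⟩ := hXQ
  have hvs : Q.restrict Aᶜ ⟂ₘ Q.restrict A := by
    refine ⟨A, hA, ?_, ?_⟩
    · rw [Measure.restrict_apply hA]; simp
    · rw [Measure.restrict_apply hA.compl]; simp
  have hsum : Q.restrict Aᶜ + Q.restrict A = Q := by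
    rw [add_comm]; exact Measure.restrict_add_restrict_compl hA
  let j : JordanDecomposition I01 := ⟨Q.restrict Aᶜ, Q.restrict A, hvs⟩
  let k : JordanDecomposition I01 := ⟨xs.toJordanDecomposition.posPart + Q.restrict Aᶜ,
    xs.toJordanDecomposition.negPart + Q.restrict A, by
      refine Measure.MutuallySingular.add_left ?_ ?_
      · exact Measure.MutuallySingular.add_right xs.toJordanDecomposition.mutuallySingular
          (hX1.symm.restrict A).symm
      · exact Measure.MutuallySingular.add_right (hX2.symm.restrict Aᶜ) hvs⟩
  have hk : xs + j.toSignedMeasure = k.toSignedMeasure := by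
    conv_lhs => rw [← xs.toSignedMeasure_toJordanDecomposition]
    simp only [JordanDecomposition.toSignedMeasure, j, k, Measure.toSignedMeasure_add]
    abel
  have hv : ∀ g, smInt j.toSignedMeasure g = ∑ i, w i * (sgn A (p i) * g (p i)) := by
    intro g
    rw [smInt_eq j.toSignedMeasure (Q.restrict Aᶜ) (Q.restrict A) rfl, ← sgn_integral A hA, hQi]
  refine ⟨j.toSignedMeasure, ?_, ?_, hv, ?_⟩
  · unfold smNorm SignedMeasure.totalVariation
    rw [JordanDecomposition.toJordanDecomposition_toSignedMeasure]
    simp only [j]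
    rw [hsum, hQu]; simp
  · rw [hk]
    unfold smNorm SignedMeasure.totalVariation at hxs ⊢
    rw [JordanDecomposition.toJordanDecomposition_toSignedMeasure]
    simp only [k]
    have : xs.toJordanDecomposition.posPart + Q.restrict Aᶜ +
        (xs.toJordanDecomposition.negPart + Q.restrict A) = 
        (xs.toJordanDecomposition.posPart + xs.toJordanDecomposition.negPart) + Q := by
      conv_rhs => rw [← hsum]
      abel
    rw [this, Measure.add_apply, ENNReal.toReal_add (measure_ne_top _ _) (measure_ne_top _ _), hxs,
      hQu]
    norm_num
  · intro es g
    have hi : ∀ (R : Measure I01) [IsFiniteMeasure R], Integrable g R := fun R _ =>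
      g.continuous.integrable_of_hasCompactSupport (HasCompactSupport.of_compactSpace _)
    rw [smInt_eq (es - j.toSignedMeasure) (es.toJordanDecomposition.posPart + Q.restrict A)
      (es.toJordanDecomposition.negPart + Q.restrict Aᶜ),
      smInt_eq j.toSignedMeasure (Q.restrict Aᶜ) (Q.restrict A) rfl,
      integral_add_measure (hi _) (hi _), integral_add_measure (hi _) (hi _)]
    · unfold smInt; ring
    · conv_lhs => rw [← es.toSignedMeasure_toJordanDecomposition]
      simp only [JordanDecomposition.toSignedMeasure, j, Measure.toSignedMeasure_add]
      abel

/-! ### the map into `ℓ¹` -/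

abbrev ell1 : Type := lp (fun _ : ℕ => ℝ) 1

lemma ell1_memlp (e : ℕ → ℝ) (K : ℝ) (h : ∀ F : Finset ℕ, ∑ n ∈ F, |e n| ≤ K) :
    Memℓp (E := fun _ : ℕ => ℝ) e 1 := by
  apply memℓp_gen' (C := K)
  intro s
  simpa using h s

lemma ell1_hasSum (u : ell1) : HasSum (fun n => |u n|) ‖u‖ := by
  have := lp.hasSum_norm (p := 1) (by simp) u
  simpa using this

/-- pairing with a bounded sequence -/
lemma ell1_pair (a : ℕ → ℝ) (K : ℝ) (hK : 0 ≤ K) (ha : ∀ n, |a n| ≤ K) :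
    ∃ Λ : ell1 →L[ℝ] ℝ, (∀ u, HasSum (fun n => a n * u n) (Λ u)) ∧ ∀ u, |Λ u| ≤ K * ‖u‖ := by
  have hb : ∀ (u : ell1) n, ‖a n * u n‖ ≤ K * |u n| := fun u n => by
    rw [norm_mul, Real.norm_eq_abs, Real.norm_eq_abs]
    gcongr
    exact ha n
  have hs : ∀ u : ell1, Summable fun n => a n * u n := fun u =>
    Summable.of_norm_bounded ((ell1_hasSum u).summable.mul_left K) (hb u)
  have hn : ∀ u : ell1, |∑' n, a n * u n| ≤ K * ‖u‖ := fun u =>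
    tsum_of_norm_bounded ((ell1_hasSum u).mul_left K) (hb u)
  refine ⟨LinearMap.mkContinuous
    { toFun := fun u => ∑' n, a n * u n
      map_add' := fun u v => ?_
      map_smul' := fun c u => ?_ } K hn, fun u => (hs u).hasSum, hn⟩
  · rw [← (hs u).tsum_add (hs v)]
    refine tsum_congr fun n => ?_
    rw [lp.coeFn_add, Pi.add_apply]; ring
  · rw [RingHom.id_apply, smul_eq_mul, ← tsum_mul_left]
    refine tsum_congr fun n => ?_
    rw [lp.coeFn_smul, Pi.smul_apply, smul_eq_mul]; ring

lemma ell1_map (e : ℕ → C01) (K : ℝ) (h : ∀ t (F : Finset ℕ), ∑ n ∈ F, |e n t| ≤ K) :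
    ∃ G : I01 → ell1, StronglyMeasurable G ∧ (∀ t n, G t n = e n t) ∧ ∀ t, ‖G t‖ ≤ K := by
  let G : I01 → ell1 := fun t => ⟨fun n => e n t, ell1_memlp _ K (h t)⟩
  refine ⟨G, ?_, fun _ _ => rfl, fun t => ?_⟩
  · have key : ∀ t, Tendsto (fun N => ∑ n ∈ Finset.range N,
        (lp.single 1 n (e n t) : ell1)) atTop (𝓝 (G t)) := fun t =>
      (lp.hasSum_single (p := 1) (by simp) (G t)).tendsto_sum_nat
    refine stronglyMeasurable_of_tendsto (u := atTop) (f := fun N t => ∑ n ∈ Finset.range N,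
        (lp.single 1 n (e n t) : ell1)) (fun N => ?_) (tendsto_pi_nhds.2 key)
    apply Continuous.stronglyMeasurable
    refine continuous_finsetSum _ fun n _ => ?_
    exact (lp.singleContinuousAddMonoidHom (fun _ : ℕ => ℝ) 1 n).continuous.comp (e n).continuous
  · exact hasSum_le_of_sum_le (ell1_hasSum (G t)) (h t)

/-- Let `Y ⊆ C[0,1]` be a closed subspace isomorphic to `c₀`. Then for all norm-one
`x*, e* ∈ M[0,1]` with `e*` atomless, every `ε > 0` and every norm-one `f ∈ C[0,1]`
with `e*(f) > 1 - ε`, there is `v*` in the closed unit ball of `M[0,1]` with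
`v*(f) > 1 - ε`, `‖x* + v*‖ > 2 - ε` and `‖(e* - v*)|_Y‖ < ε`. -/
theorem c0_subspace_narrowness
    (Y : Submodule ℝ C01) (hYc : IsClosed (Y : Set C01))
    (hYiso : Nonempty (↥Y ≃L[ℝ] c0))
    (xs es : SignedMeasure I01) (hxs : smNorm xs = 1) (hes : smNorm es = 1)
    (hatomless : ∀ t : I01, es {t} = 0)
    (ε : ℝ) (hε : 0 < ε)
    (f : C01) (hf : ‖f‖ = 1) (hef : smInt es f > 1 - ε) :
    ∃ v : SignedMeasure I01, smNorm v ≤ 1 ∧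
      smInt v f > 1 - ε ∧ smNorm (xs + v) > 2 - ε ∧ smRestNorm (es - v) Y < ε := by
  obtain ⟨T⟩ := hYiso
  obtain ⟨K, e, hK, he, hY⟩ := Y_data Y T
  obtain ⟨G, hGm, hGe, hGK⟩ := ell1_map e K he
  obtain ⟨A, hA, hes1, hes0⟩ := es_data es hatomless
  have : IsFiniteMeasure es.totalVariation := by
    unfold SignedMeasure.totalVariation; infer_instance
  have : IsFiniteMeasure xs.totalVariation := by
    unfold SignedMeasure.totalVariation; infer_instance
  have : IsProbabilityMeasure es.totalVariation := by
    refine ⟨?_⟩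
    unfold smNorm at hes
    rwa [ENNReal.toReal_eq_one_iff] at hes
  have hS : ∀ᵐ t ∂es.totalVariation, t ∈ {t | xs.totalVariation {t} = 0} := by
    rw [ae_iff]
    have hc := countable_atoms xs.totalVariation
    exact (measure_null_iff_singleton (μ := es.totalVariation) hc).2 fun t _ => hes0 t
  let H : I01 → ell1 × ℝ := fun t => (sgn A t • G t, sgn A t * f t)
  have hσ := (sgn_meas A hA).stronglyMeasurable
  have hHm : StronglyMeasurable H :=
    (hσ.smul hGm).prodMk (hσ.mul f.continuous.stronglyMeasurable)
  have hHK : ∀ t, ‖H t‖ ≤ max K 1 := by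
    intro t
    simp only [H, Prod.norm_def]
    refine max_le_max ?_ ?_
    · rw [norm_smul, Real.norm_eq_abs, sgn_abs, one_mul]; exact hGK t
    · rw [norm_mul, Real.norm_eq_abs, sgn_abs, one_mul]; exact (f.norm_coe_le_norm t).trans hf.le
  have hHi : Integrable H es.totalVariation :=
    (integrable_const (max K 1)).mono' hHm.aestronglyMeasurable (Eventually.of_forall hHK)
  set δ : ℝ := min (smInt es f - (1 - ε)) (ε / (2 * (K + 1))) with hδ
  have hδ0 : 0 < δ := lt_min (by linarith) (by positivity)
  obtain ⟨n, w, p, hw, hw1, hp, hd⟩ :=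
    sampling es.totalVariation H hHm _ hHK _ hS δ hδ0
  obtain ⟨v, hv1, hv2, hvi, hvs⟩ := v_data xs hxs A hA n w p hw hw1 hp
  set D := ∫ t, H t ∂es.totalVariation - ∑ i, w i • H (p i) with hD
  -- any functional of the form below is controlled by `D`
  have hfun : ∀ (Φ : ell1 × ℝ →L[ℝ] ℝ) (g : C01), (∀ t, Φ (H t) = sgn A t * g t) →
      smInt es g - smInt v g = Φ D := by
    intro Φ g hg
    rw [hD, map_sub, ← Φ.integral_comp_comm hHi, map_sum, hes1, hvi]
    simp only [map_smul, hg, smul_eq_mul]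
  refine ⟨v, hv1.le, ?_, by linarith, ?_⟩
  · have h1 := hfun (ContinuousLinearMap.snd ℝ ell1 ℝ) f (fun t => rfl)
    have h2 : |(ContinuousLinearMap.snd ℝ ell1 ℝ) D| ≤ ‖D‖ := norm_snd_le D
    have h3 := le_abs_self ((ContinuousLinearMap.snd ℝ ell1 ℝ) D)
    have h4 := min_le_left (smInt es f - (1 - ε)) (ε / (2 * (K + 1)))
    linarith
  · have hKe : K * δ ≤ ε / 2 := by
      calc K * δ ≤ (K + 1) * (ε / (2 * (K + 1))) := by
            gcongr
            · linarith
            · exact min_le_right _ _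
        _ = ε / 2 := by field_simp
    refine lt_of_le_of_lt (Real.sSup_le ?_ (by positivity : (0 : ℝ) ≤ ε / 2)) (by linarith)
    rintro r ⟨y, hy, hy1, rfl⟩
    obtain ⟨a, ha, hay⟩ := hY y hy hy1
    obtain ⟨Λ, hΛ, hΛn⟩ := ell1_pair a K hK ha
    have hyt : ∀ t, Λ (G t) = y t := by
      intro t
      refine tendsto_nhds_unique (hΛ (G t)).tendsto_sum_nat ((hay t).congr fun N => ?_)
      simp only [hGe]
    rw [hvs, hfun (Λ.comp (ContinuousLinearMap.fst ℝ ell1 ℝ)) y (fun t => by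
      change Λ (sgn A t • G t) = _
      rw [map_smul, hyt, smul_eq_mul])]
    refine (hΛn D.1).trans (le_trans ?_ hKe)
    have h2 : ‖D.1‖ ≤ ‖D‖ := norm_fst_le D
    gcongr
    linarith
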